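/- Suboptimality of the Laplace slab for the complete empirical Bayes posterior: there exist constants D > 0, N_0 > 0 and c_0 > 0 such that, for any n ≥ N_0 and any integer s_n with 1 ≤ s_n ≤ c_0·n, there exists θ_0 ∈ ℓ0[s_n] such that E_{θ_0} ∫ ‖θ − θ_0‖² dΠ_{ĥα}(θ | X) ≥ D · s_n · exp(√(log(n/s_n))), where ‖·‖ is the Euclidean norm on ℝ^n. -/

import Mathlib

/-!
Statement 0: Suboptimality of the Laplace slab for the complete empirical
Bayes posterior in the sparse Gaussian sequence model.
-/

open MeasureTheory Real Set

noncomputable section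

/-- Standard normal density. -/
def phi (x : ℝ) : ℝ := Real.exp (-x ^ 2 / 2) / Real.sqrt (2 * Real.pi)

/-- Standard Laplace density. -/
def lapDen (x : ℝ) : ℝ := Real.exp (-|x|) / 2

/-- Convolution `g = φ * γ`. -/
def conv (γ : ℝ → ℝ) (x : ℝ) : ℝ := ∫ u, phi (x - u) * γ u

/-- Posterior weight `a(x) = α g(x) / ((1-α) φ(x) + α g(x))`. -/
def aWt (γ : ℝ → ℝ) (α x : ℝ) : ℝ :=
  α * conv γ x / ((1 - α) * phi x + α * conv γ x)

/-- Density of the single-coordinate posterior with respect to `volume + δ₀`: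
the point mass `1 - a(x)` at `0`, and the continuous part `a(x) γ_x`. -/
def coordDen (γ : ℝ → ℝ) (α x u : ℝ) : ℝ :=
  if u = 0 then 1 - aWt γ α x else aWt γ α x * (phi (x - u) * γ u / conv γ x)

/-- Single-coordinate posterior `(1 - a(x)) δ₀ + a(x) G_x`. -/
def coordPost (γ : ℝ → ℝ) (α x : ℝ) : Measure ℝ :=
  (volume + Measure.dirac (0 : ℝ)).withDensity fun u => ENNReal.ofReal (coordDen γ α x u)

/-- The spike and slab posterior `Π_α[· | X]` on `ℝⁿ`, for a fixed weight `α`. -/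
def post (γ : ℝ → ℝ) (n : ℕ) (α : ℝ) (X : Fin n → ℝ) : Measure (Fin n → ℝ) :=
  Measure.pi fun i => coordPost γ α (X i)

/-- Law `P_θ` of the data `X`, `X_i = θ_i + ε_i` with `ε_i` i.i.d. `N(0,1)`. -/
def Pdata (n : ℕ) (θ : Fin n → ℝ) : Measure (Fin n → ℝ) :=
  Measure.pi fun i => ProbabilityTheory.gaussianReal (θ i) 1

/-- The class `ℓ₀[s]` of `s`-sparse vectors. -/
def ell0 (n s : ℕ) : Set (Fin n → ℝ) := {θ | Nat.card {i : Fin n // θ i ≠ 0} ≤ s}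

/-- Log-marginal likelihood `ℓ_n(α; X)`. -/
def logMarg (γ : ℝ → ℝ) {n : ℕ} (α : ℝ) (X : Fin n → ℝ) : ℝ :=
  ∑ i, Real.log ((1 - α) * phi (X i) + α * conv γ (X i))

/-- `0` is a median of the single-coordinate posterior distribution. -/
def medianZero (γ : ℝ → ℝ) (α x : ℝ) : Prop :=
  2⁻¹ ≤ coordPost γ α x (Set.Iic 0) ∧ 2⁻¹ ≤ coordPost γ α x (Set.Ici 0)

/-- `t` is the posterior median threshold function: for each `α ∈ (0,1)`,
`t α > 0` and the posterior median at observation `x` is `0` iff `|x| ≤ t α`. -/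
def IsThreshold (γ : ℝ → ℝ) (t : ℝ → ℝ) : Prop :=
  ∀ α ∈ Set.Ioo (0 : ℝ) 1, 0 < t α ∧ ∀ x : ℝ, (medianZero γ α x ↔ |x| ≤ t α)

/-- `hahat` is a marginal maximum likelihood empirical Bayes estimator of `α`,
with maximisation restricted to `[αn, 1]`. -/
def IsMMLE (γ : ℝ → ℝ) {n : ℕ} (αn : ℝ) (hahat : (Fin n → ℝ) → ℝ) : Prop :=
  Measurable hahat ∧ ∀ X : Fin n → ℝ, hahat X ∈ Set.Icc αn 1 ∧
    ∀ α ∈ Set.Icc αn 1, logMarg γ α X ≤ logMarg γ (hahat X) X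

/-- Expected posterior squared `L²`-moment
`E_{θ₀} ∫ ‖θ - θ₀‖² dΠ_{ĥα}(θ | X)` for the plug-in posterior. -/
def postRisk (γ : ℝ → ℝ) {n : ℕ} (hahat : (Fin n → ℝ) → ℝ) (θ0 : Fin n → ℝ) : ℝ :=
  ∫ X, (∫ θ, (∑ i, (θ i - θ0 i) ^ 2) ∂(post γ n (hahat X) X)) ∂(Pdata n θ0)


lemma integral_exp_abs {η : ℝ} (hη : 0 < η) : ∫ x : ℝ, Real.exp (-η * |x|) = 2 / η := by
  rw [integral_comp_abs (f := fun x => Real.exp (-η * x)), integral_exp_mul_Ioi (by linarith)]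
  simp
  field_simp

lemma integrable_exp_abs {η : ℝ} (hη : 0 < η) :
    Integrable (fun x : ℝ => Real.exp (-η * |x|)) := by
  by_contra h
  have := integral_undef h
  rw [integral_exp_abs hη] at this
  have : (0:ℝ) < 2 / η := by positivity
  linarith

lemma sqrt2pi_pos : 0 < Real.sqrt (2 * Real.pi) := by positivity

lemma one_le_sqrt2pi : 1 ≤ Real.sqrt (2 * Real.pi) := by
  rw [Real.one_le_sqrt]; linarith [Real.pi_gt_three]

lemma sqrt2pi_le : Real.sqrt (2 * Real.pi) ≤ 2.6 := by
  rw [Real.sqrt_le_left (by norm_num)]; linarith [Real.pi_lt_d2]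

lemma phi_pos (x : ℝ) : 0 < phi x := by unfold phi; positivity

lemma phi_le_exp (x : ℝ) : phi x ≤ Real.exp (-x ^ 2 / 2) := by
  unfold phi; exact div_le_self (Real.exp_pos _).le one_le_sqrt2pi

lemma phi_le_one (x : ℝ) : phi x ≤ 1 := by
  refine (phi_le_exp x).trans (Real.exp_le_one_iff.2 ?_)
  nlinarith [sq_nonneg x]

lemma phi_cont : Continuous phi := by unfold phi; fun_prop

lemma phi_eq_pdf (x : ℝ) : ProbabilityTheory.gaussianPDFReal 0 1 x = phi x := by
  simp [ProbabilityTheory.gaussianPDFReal, phi]; ring_nf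

lemma phi_integrable : Integrable phi := by
  have := ProbabilityTheory.integrable_gaussianPDFReal 0 1
  exact this.congr (Filter.Eventually.of_forall phi_eq_pdf)

lemma phi_integral : ∫ x, phi x = 1 := by
  have := ProbabilityTheory.integral_gaussianPDFReal_eq_one 0 (v := 1) one_ne_zero
  simpa only [phi_eq_pdf] using this

lemma lap_pos (x : ℝ) : 0 < lapDen x := by unfold lapDen; positivity

lemma lap_cont : Continuous lapDen := by unfold lapDen; fun_prop

lemma lap_eq (x : ℝ) : lapDen x = Real.exp (-1 * |x|) / 2 := by simp [lapDen]

lemma lap_integrable : Integrable lapDen := by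
  have := (integrable_exp_abs (η := 1) one_pos).div_const 2
  exact this.congr (Filter.Eventually.of_forall fun x => (lap_eq x).symm)

lemma lap_integral : ∫ x, lapDen x = 1 := by
  simp_rw [lap_eq]
  rw [integral_div, integral_exp_abs one_pos]; norm_num

/-- the unnormalised posterior kernel -/
def ker (x u : ℝ) : ℝ := phi (x - u) * lapDen u

lemma ker_pos (x u : ℝ) : 0 < ker x u := mul_pos (phi_pos _) (lap_pos _)

lemma ker_cont : Continuous (fun p : ℝ × ℝ => ker p.1 p.2) := by
  unfold ker
  exact (phi_cont.comp (by fun_prop)).mul (lap_cont.comp (by fun_prop))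

lemma ker_cont_right (x : ℝ) : Continuous (ker x) := ker_cont.comp (by fun_prop : Continuous fun u => (x, u))

lemma sq_sub_le_exp (μ u : ℝ) : (u - μ) ^ 2 ≤ (16 + 2 * μ ^ 2) * Real.exp (|u| / 2) := by
  have h1 : (|u| / 2) ^ 2 / 2 ≤ Real.exp (|u| / 2) := by
    have := Real.pow_div_factorial_le_exp (|u| / 2) (by positivity) 2
    simpa using this
  have h2 : (1 : ℝ) ≤ Real.exp (|u| / 2) := Real.one_le_exp (by positivity)
  have h3 : |u| ^ 2 = u ^ 2 := sq_abs u
  nlinarith [sq_nonneg (u + μ), sq_nonneg μ]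

lemma ker_moment_integrable (μ x : ℝ) : Integrable (fun u => (u - μ) ^ 2 * ker x u) := by
  have h := (integrable_exp_abs (η := 1/2) (by norm_num)).const_mul ((16 + 2 * μ ^ 2))
  refine h.mono' ?_ (Filter.Eventually.of_forall fun u => ?_)
  · exact ((by fun_prop : Continuous fun u : ℝ => (u - μ)^2).mul (ker_cont_right x)).aestronglyMeasurable
  · have k0 := (ker_pos x u).le
    rw [Real.norm_of_nonneg (by positivity)]
    have h1 := sq_sub_le_exp μ u
    have h2 : ker x u ≤ Real.exp (-|u|) := by
      unfold ker lapDen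
      have := phi_le_one (x - u)
      have := Real.exp_pos (-|u|)
      have := phi_pos (x-u)
      nlinarith
    calc (u - μ) ^ 2 * ker x u ≤ ((16 + 2 * μ ^ 2) * Real.exp (|u| / 2)) * Real.exp (-|u|) := by gcongr
      _ = _ := by
        rw [mul_assoc, ← Real.exp_add]; congr 2; ring

lemma ker_integrable (x : ℝ) : Integrable (ker x) := by
  refine lap_integrable.mono' (ker_cont_right x).aestronglyMeasurable
    (Filter.Eventually.of_forall fun u => ?_)
  rw [Real.norm_of_nonneg (ker_pos x u).le]
  unfold ker
  have := phi_le_one (x-u); have := lap_pos u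
  nlinarith

lemma conv_eq (x : ℝ) : conv lapDen x = ∫ u, ker x u := rfl

lemma ker_support (x : ℝ) : Function.support (ker x) = univ := by
  ext u; simp [(ker_pos x u).ne']

lemma conv_pos (x : ℝ) : 0 < conv lapDen x := by
  rw [conv_eq, integral_pos_iff_support_of_nonneg (fun u => (ker_pos x u).le) (ker_integrable x),
    ker_support]
  simp

/-- unnormalised moment -/
def mom (μ x : ℝ) : ℝ := ∫ u, (u - μ) ^ 2 * ker x u

lemma mom_nonneg (μ x : ℝ) : 0 ≤ mom μ x :=
  integral_nonneg fun u => mul_nonneg (sq_nonneg _) (ker_pos x u).le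

lemma mom_pos (x : ℝ) : 0 < mom 0 x := by
  unfold mom
  rw [integral_pos_iff_support_of_nonneg
    (fun u => mul_nonneg (sq_nonneg _) (ker_pos x u).le) (ker_moment_integrable 0 x)]
  have : Function.support (fun u => (u - 0) ^ 2 * ker x u) = {0}ᶜ := by
    ext u; simp [(ker_pos x u).ne']
  rw [this]
  rw [measure_compl (measurableSet_singleton _) (by simp)]; simp

lemma conv_measurable : Measurable (conv lapDen) := by
  have : StronglyMeasurable (fun x => ∫ u, ker x u) :=
    StronglyMeasurable.integral_prod_right (f := ker) ker_cont.stronglyMeasurable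
  exact this.measurable

lemma mom_measurable (μ : ℝ) : Measurable (mom μ) := by
  have : StronglyMeasurable (fun x => ∫ u, (u - μ) ^ 2 * ker x u) :=
    StronglyMeasurable.integral_prod_right (f := fun x u => (u - μ) ^ 2 * ker x u)
      ((by fun_prop : Continuous fun p : ℝ × ℝ => (p.2 - μ)^2).mul ker_cont).stronglyMeasurable
  exact this.measurable

lemma ker_sym (x u : ℝ) :
    ker x u + ker x (-u) = 2 * Real.cosh (x * u) * Real.exp (-x^2/2) * ker 0 u := by
  have e : ∀ y v : ℝ, ker y v = Real.exp (-y^2/2) * Real.exp (y * v) * ker 0 v := by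
    intro y v
    unfold ker phi
    rw [show -(y - v)^2/2 = -y^2/2 + y*v + -(0 - v)^2/2 by ring, Real.exp_add, Real.exp_add]
    ring
  rw [e x u, e x (-u), Real.cosh_eq]
  have : ker 0 (-u) = ker 0 u := by simp [ker, phi, lapDen]
  rw [this, mul_neg]; ring

/-- weighted symmetrisation -/
lemma ker_even_integral (q : ℝ → ℝ) (hq : ∀ u, q (-u) = q u) (x : ℝ)
    (hi : Integrable (fun u => q u * ker x u)) :
    2 * ∫ u, q u * ker x u = ∫ u, q u * (2 * Real.cosh (x * u) * Real.exp (-x^2/2) * ker 0 u) := by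
  have h1 : ∫ u, q u * ker x (-u) = ∫ u, q u * ker x u := by
    rw [← integral_neg_eq_self (fun u => q u * ker x u)]
    simp only [hq]
  have h2 : Integrable (fun u => q u * ker x (-u)) := by
    have := hi.comp_neg
    simpa only [hq] using this
  calc 2 * ∫ u, q u * ker x u = (∫ u, q u * ker x u) + ∫ u, q u * ker x (-u) := by rw [h1]; ring
    _ = ∫ u, (q u * ker x u + q u * ker x (-u)) := (integral_add hi h2).symm
    _ = _ := by
      congr 1; ext u; rw [← mul_add, ker_sym]

lemma even_integrable (q : ℝ → ℝ) (hq : ∀ u, q (-u) = q u) (x : ℝ)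
    (hi : Integrable (fun u => q u * ker x u)) :
    Integrable (fun u => q u * (2 * Real.cosh (x * u) * Real.exp (-x^2/2) * ker 0 u)) := by
  have h2 : Integrable (fun u => q u * ker x (-u)) := by
    have := hi.comp_neg
    simpa only [hq] using this
  refine (hi.add h2).congr (Filter.Eventually.of_forall fun u => ?_)
  simp only [Pi.add_apply]
  rw [← mul_add, ker_sym]

lemma conv_ge_phi (x : ℝ) : conv lapDen 0 * phi x ≤ conv lapDen x := by
  have hi : Integrable (fun u => (fun _ : ℝ => (1:ℝ)) u * ker x u) := by simpa using ker_integrable x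
  have h := ker_even_integral (fun _ => 1) (fun _ => rfl) x hi
  have h' := even_integrable (fun _ => 1) (fun _ => rfl) x hi
  simp only [one_mul] at h h'
  have h3 : ∫ u, 2 * Real.exp (-x^2/2) * ker 0 u ≤ 2 * ∫ u, ker x u := by
    rw [h]
    refine integral_mono ((ker_integrable 0).const_mul _) h' fun u => ?_
    have h1 := Real.one_le_cosh (x * u)
    have h2 := (ker_pos 0 u).le
    have := Real.exp_pos (-x^2/2)
    simp only
    gcongr
    nlinarith
  rw [integral_const_mul] at h3
  rw [conv_eq, conv_eq]
  have h0 : 0 < ∫ u, ker 0 u := conv_pos 0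
  have := phi_le_exp x
  nlinarith

/-- the second moment constant at zero -/
def c2 : ℝ := mom 0 0 / conv lapDen 0

lemma c2_pos : 0 < c2 := div_pos (mom_pos 0) (conv_pos 0)

lemma mom_ge (x : ℝ) : c2 * conv lapDen x ≤ mom 0 x := by
  have hI : ∀ y, Integrable (fun u => (u^2 - c2) * ker y u) := by
    intro y
    have := (ker_moment_integrable 0 y).sub ((ker_integrable y).const_mul c2)
    refine this.congr (Filter.Eventually.of_forall fun u => ?_)
    simp only [Pi.sub_apply]; ring
  have hval : ∀ y, ∫ u, (u^2 - c2) * ker y u = mom 0 y - c2 * conv lapDen y := by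
    intro y
    rw [mom, conv_eq, ← integral_const_mul, ← integral_sub (ker_moment_integrable 0 y) ((ker_integrable y).const_mul c2)]
    congr 1; ext u; ring
  have h := ker_even_integral (fun u => u^2 - c2) (fun u => by ring) x (hI x)
  have h' := even_integrable (fun u => u^2 - c2) (fun u => by ring) x (hI x)
  have h3 : ∫ u, (2 * Real.cosh (x * √c2) * Real.exp (-x^2/2)) * ((u^2 - c2) * ker 0 u)
      ≤ 2 * ∫ u, (u^2 - c2) * ker x u := by
    rw [h]
    refine integral_mono ((hI 0).const_mul _) h' fun u => ?_
    have hk := ker_pos 0 u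
    have he := Real.exp_pos (-x^2/2)
    have key : 0 ≤ (u^2 - c2) * (Real.cosh (x * u) - Real.cosh (x * √c2)) := by
      have hs : √c2 ^ 2 = c2 := Real.sq_sqrt c2_pos.le
      have hs0 := Real.sqrt_nonneg c2
      rcases le_total (|u|) (√c2) with hu | hu
      · have h1 : u^2 ≤ c2 := by rw [← hs, ← sq_abs u]; gcongr
        have h2 : Real.cosh (x * u) ≤ Real.cosh (x * √c2) := by
          rw [Real.cosh_le_cosh, abs_mul, abs_mul, abs_of_nonneg hs0]; gcongr
        nlinarith
      · have h1 : c2 ≤ u^2 := by rw [← hs, ← sq_abs u]; gcongr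
        have h2 : Real.cosh (x * √c2) ≤ Real.cosh (x * u) := by
          rw [Real.cosh_le_cosh, abs_mul, abs_mul, abs_of_nonneg hs0]; gcongr
        nlinarith
    have := mul_nonneg key (mul_pos he hk).le
    simp only
    nlinarith
  rw [integral_const_mul, hval, hval] at h3
  have : mom 0 0 - c2 * conv lapDen 0 = 0 := by
    unfold c2; field_simp [(conv_pos 0).ne']; ring
  rw [this] at h3
  linarith

lemma lap_shift_le (x v : ℝ) : lapDen (x - v) ≤ Real.exp (-|x|) / 2 * Real.exp |v| := by
  unfold lapDen
  rw [div_mul_eq_mul_div, ← Real.exp_add]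
  have := abs_sub_abs_le_abs_sub x v
  gcongr
  linarith

lemma lap_shift_ge (x v : ℝ) : Real.exp (-|x|) / 2 * Real.exp (-|v|) ≤ lapDen (x - v) := by
  unfold lapDen
  rw [div_mul_eq_mul_div, ← Real.exp_add]
  have := abs_sub x v
  gcongr
  linarith

lemma conv_eq' (x : ℝ) : conv lapDen x = ∫ v, phi v * lapDen (x - v) := by
  rw [conv, ← integral_sub_left_eq_self _ _ x]
  simp

lemma phi_exp_le (v : ℝ) : phi v * Real.exp |v| ≤ Real.exp 1 / √(2*π) * Real.exp (-(1/4) * v^2) := by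
  unfold phi
  rw [div_mul_eq_mul_div, div_mul_eq_mul_div, ← Real.exp_add, ← Real.exp_add]
  refine div_le_div_of_nonneg_right (Real.exp_le_exp.2 ?_) sqrt2pi_pos.le
  nlinarith [sq_nonneg (|v|/2 - 1), sq_abs v]

lemma conv_le (x : ℝ) : conv lapDen x ≤ 2 * Real.exp (-|x|) := by
  rw [conv_eq']
  have hg := (integrable_exp_neg_mul_sq (b := 1/4) (by norm_num)).const_mul
    (Real.exp (-|x|) / 2 * (Real.exp 1 / √(2*π)))
  have : ∫ v, phi v * lapDen (x - v) ≤
      ∫ v : ℝ, (Real.exp (-|x|) / 2 * (Real.exp 1 / √(2*π))) * Real.exp (-(1/4) * v^2) := by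
    refine integral_mono_of_nonneg (Filter.Eventually.of_forall fun v => (mul_pos (phi_pos _) (lap_pos _)).le)
      hg (Filter.Eventually.of_forall fun v => ?_)
    have h1 := lap_shift_le x v
    have h2 := phi_exp_le v
    have h3 := phi_pos v
    have h4 := Real.exp_pos (-|x|)
    simp only
    calc phi v * lapDen (x - v) ≤ phi v * (Real.exp (-|x|) / 2 * Real.exp |v|) := by gcongr
      _ = Real.exp (-|x|) / 2 * (phi v * Real.exp |v|) := by ring
      _ ≤ Real.exp (-|x|) / 2 * (Real.exp 1 / √(2*π) * Real.exp (-(1/4) * v^2)) := by gcongr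
      _ = _ := by ring
  refine this.trans ?_
  rw [integral_const_mul, integral_gaussian]
  have e1 : √(π / (1/4)) = √2 * √(2*π) := by
    rw [← Real.sqrt_mul (by norm_num)]; congr 1; ring
  rw [e1]
  have e2 : Real.exp (-|x|) / 2 * (Real.exp 1 / √(2*π)) * (√2 * √(2*π))
    = Real.exp (-|x|) * (Real.exp 1 * √2 / 2) := by
    field_simp [sqrt2pi_pos.ne']
  rw [e2, mul_comm]
  gcongr
  have h1 := Real.exp_one_lt_d9
  have h2 : √2 ≤ 1.42 := by rw [Real.sqrt_le_left (by norm_num)]; norm_num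
  have := Real.exp_pos 1
  nlinarith [Real.sqrt_nonneg 2]

lemma phi_expneg_integrable : Integrable (fun v => phi v * Real.exp (-|v|)) := by
  refine phi_integrable.mono' (phi_cont.mul (by fun_prop)).aestronglyMeasurable
    (Filter.Eventually.of_forall fun v => ?_)
  have := phi_pos v
  rw [Real.norm_of_nonneg (by positivity)]
  have : Real.exp (-|v|) ≤ 1 := Real.exp_le_one_iff.2 (by simp)
  nlinarith

lemma conv_ge_lap : ∃ c > 0, ∀ x, c * Real.exp (-|x|) ≤ conv lapDen x := by
  refine ⟨(∫ v, phi v * Real.exp (-|v|)) / 2, ?_, fun x => ?_⟩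
  · refine div_pos ?_ two_pos
    rw [integral_pos_iff_support_of_nonneg (fun v => (mul_pos (phi_pos v) (Real.exp_pos _)).le)
      phi_expneg_integrable]
    have : Function.support (fun v => phi v * Real.exp (-|v|)) = univ := by
      ext u; simp [(phi_pos u).ne', (Real.exp_pos _).ne']
    rw [this]; simp
  · rw [conv_eq']
    have : Integrable (fun v => phi v * lapDen (x - v)) := by
      have := (ker_integrable x).comp_sub_left x
      simpa [ker] using this
    calc _ = ∫ v, (Real.exp (-|x|) / 2) * (phi v * Real.exp (-|v|)) := by
            rw [integral_const_mul]; ring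
      _ ≤ _ := by
        refine integral_mono (phi_expneg_integrable.const_mul _) this fun v => ?_
        have h1 := lap_shift_ge x v
        have h3 := phi_pos v
        simp only
        calc _ = phi v * (Real.exp (-|x|) / 2 * Real.exp (-|v|)) := by ring
          _ ≤ _ := by gcongr

lemma mom_le_conv (μ : ℝ) : ∃ C > 0, ∀ x, mom μ x ≤ C * (1 + x^2) * conv lapDen x := by
  obtain ⟨c, hc, hcg⟩ := conv_ge_lap
  set I : ℝ := ∫ v : ℝ, (2 * v^2 + 4 + 4 * μ^2) * Real.exp (-(1/4) * v^2) with hI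
  have hint : Integrable (fun v : ℝ => (2 * v^2 + 4 + 4 * μ^2) * Real.exp (-(1/4) * v^2)) := by
    have h1 := integrable_rpow_mul_exp_neg_mul_sq (b := 1/4) (by norm_num) (s := 2) (by norm_num)
    have h2 := integrable_exp_neg_mul_sq (b := 1/4) (by norm_num)
    refine ((h1.const_mul 2).add (h2.const_mul (4 + 4 * μ^2))).congr
      (Filter.Eventually.of_forall fun v => ?_)
    simp only [Pi.add_apply, Real.rpow_two]; ring
  have hI0 : 0 ≤ I := integral_nonneg fun v => by positivity
  have hmain : ∀ x, mom μ x ≤ Real.exp (-|x|) * (1 + x^2) * (Real.exp 1 * I) := by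
    intro x
    have : mom μ x = ∫ v, (x - v - μ)^2 * (phi v * lapDen (x - v)) := by
      rw [mom, ← integral_sub_left_eq_self _ _ x]; simp [ker]
    rw [this, ← mul_assoc, hI, ← integral_const_mul]
    refine integral_mono_of_nonneg
      (Filter.Eventually.of_forall fun v => mul_nonneg (sq_nonneg _) (mul_pos (phi_pos _) (lap_pos _)).le)
      (hint.const_mul _) (Filter.Eventually.of_forall fun v => ?_)
    have h1 := lap_shift_le x v
    have h2 := phi_exp_le v
    have h3 := phi_pos v
    have h4 := Real.exp_pos (-|x|)
    have hq : (x - v - μ)^2 ≤ (1 + x^2) * (2 * v^2 + 4 + 4 * μ^2) := by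
      nlinarith [sq_nonneg (x + v - μ), sq_nonneg (x+μ), sq_nonneg (x*v), sq_nonneg (x*μ), sq_nonneg v, sq_nonneg x, sq_nonneg μ]
    have hp : phi v * lapDen (x - v) ≤ Real.exp (-|x|) * (Real.exp 1 * Real.exp (-(1/4) * v^2)) := by
      calc phi v * lapDen (x - v) ≤ phi v * (Real.exp (-|x|) / 2 * Real.exp |v|) := by gcongr
        _ = Real.exp (-|x|) / 2 * (phi v * Real.exp |v|) := by ring
        _ ≤ Real.exp (-|x|) / 2 * (Real.exp 1 / √(2*π) * Real.exp (-(1/4) * v^2)) := by gcongr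
        _ ≤ Real.exp (-|x|) / 1 * (Real.exp 1 / 1 * Real.exp (-(1/4) * v^2)) := by
            gcongr
            · norm_num
            · exact one_le_sqrt2pi
        _ = _ := by ring
    simp only
    have := lap_pos (x - v)
    calc _ ≤ ((1 + x^2) * (2 * v^2 + 4 + 4 * μ^2)) * (Real.exp (-|x|) * (Real.exp 1 * Real.exp (-(1/4) * v^2))) := by
          gcongr
      _ = _ := by ring
  refine ⟨(Real.exp 1 * I + 1) / c, by positivity, fun x => (hmain x).trans ?_⟩
  have h5 : Real.exp (-|x|) ≤ conv lapDen x / c := by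
    rw [le_div_iff₀ hc]; linarith [hcg x]
  have h6 := (conv_pos x).le
  calc _ ≤ (conv lapDen x / c) * (1 + x^2) * (Real.exp 1 * I + 1) := by
        gcongr; linarith
    _ = _ := by ring

lemma conv_as_convolution : conv lapDen = convolution lapDen phi (ContinuousLinearMap.mul ℝ ℝ) volume := by
  ext x
  simp only [conv, convolution, ContinuousLinearMap.mul_apply']
  congr 1; ext u; ring

lemma conv_integrable : Integrable (conv lapDen) := by
  rw [conv_as_convolution]
  exact lap_integrable.integrable_convolution _ phi_integrable

lemma conv_integral : ∫ x, conv lapDen x = 1 := by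
  rw [conv_as_convolution, integral_convolution _ lap_integrable phi_integrable]
  simp [lap_integral, phi_integral]


/-- marginal density -/
def den (β x : ℝ) : ℝ := (1 - β) * phi x + β * conv lapDen x

lemma den_pos {β : ℝ} (h0 : 0 ≤ β) (h1 : β ≤ 1) (x : ℝ) : 0 < den β x := by
  unfold den
  have := phi_pos x
  have := conv_pos x
  rcases h0.eq_or_lt with h | h
  · subst h; simpa
  · have : 0 ≤ (1 - β) * phi x := mul_nonneg (by linarith) (by linarith)
    have : 0 < β * conv lapDen x := by positivity
    linarith

lemma den_measurable (β : ℝ) : Measurable (den β) :=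
  (phi_cont.measurable.const_mul _).add (conv_measurable.const_mul _)

lemma remainder_le {r : ℝ} (hr : 100 ≤ r) {β : ℝ} (hβ : β = 2 * Real.exp (-r^2 + r))
    (hβ2 : β ≤ 1/2) (x : ℝ) :
    (β * (conv lapDen x - phi x))^2 / den β x
      ≤ 100 * Real.exp (-r^2 - r/4) * Real.exp (-(1/10) * |x|) := by
  have hβ0 : 0 < β := by rw [hβ]; positivity
  have hd := den_pos hβ0.le (by linarith) x
  have hg := conv_pos x
  have hgle := conv_le x
  have hp := phi_pos x
  have hple := phi_le_exp x
  set T := √(2 * r^2 + 0.8 * r) with hT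
  have hT2 : T^2 = 2 * r^2 + 0.8 * r := Real.sq_sqrt (by positivity)
  have hT1 : 1.41 * r ≤ T := by
    rw [hT]; apply Real.le_sqrt_of_sq_le; nlinarith
  have hT3 : T ≤ 1.45 * r := by
    rw [hT]; rw [Real.sqrt_le_left (by linarith)]; nlinarith
  set a := |x| with ha
  have ha0 : 0 ≤ a := abs_nonneg x
  have hax : a^2 = x^2 := sq_abs x
  set g := conv lapDen x with hgdef
  rcases le_or_gt a T with h | h
  · have s1 : (β * (g - phi x))^2 / den β x ≤ 2 * β^2 * (g^2 / phi x + phi x) := by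
      have : (1/2) * phi x ≤ den β x := by
        unfold den
        have : 0 < β * conv lapDen x := by positivity
        nlinarith
      calc (β * (g - phi x))^2 / den β x ≤ (β * (g - phi x))^2 / ((1/2) * phi x) := by gcongr
        _ = 2 * β^2 * ((g - phi x)^2 / phi x) := by field_simp
        _ ≤ 2 * β^2 * ((g^2 + (phi x)^2) / phi x) := by gcongr; nlinarith [mul_pos hg hp]
        _ = _ := by field_simp
    have hE : 1 ≤ Real.exp (T^2/2 - 2*T) := Real.one_le_exp (by nlinarith)
    have s2 : g^2 / phi x ≤ 10.4 * Real.exp (T^2/2 - 2*T) := by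
      have : phi x = Real.exp (-x^2/2) / √(2*π) := rfl
      rw [this, div_div_eq_mul_div, div_le_iff₀ (Real.exp_pos _)]
      have e1 : g^2 ≤ 4 * Real.exp (-2 * a) := by
        have : (2 * Real.exp (-a))^2 = 4 * Real.exp (-2*a) := by
          rw [mul_pow, ← Real.exp_nat_mul]; norm_num
        rw [← this]; gcongr
      have e2 : Real.exp (-2*a) ≤ Real.exp (T^2/2 - 2*T) * Real.exp (-x^2/2) := by
        rw [← Real.exp_add]; apply Real.exp_le_exp.2
        nlinarith [mul_nonneg (sub_nonneg.2 h) (by linarith : 0 ≤ (T + a)/2 - 2)]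
      calc g^2 * √(2*π) ≤ (4 * (Real.exp (T^2/2 - 2*T) * Real.exp (-x^2/2))) * 2.6 := by
            gcongr
            · linarith
            · exact sqrt2pi_le
        _ = _ := by ring
    have s3 : 2 * β^2 * (g^2 / phi x + phi x) ≤ 2 * β^2 * (12 * Real.exp (T^2/2 - 2*T)) := by
      gcongr
      linarith [phi_le_one x]
    have s4 : 2 * β^2 * (12 * Real.exp (T^2/2 - 2*T)) = 96 * Real.exp (-2 * r^2 + 2 * r + (T^2/2 - 2*T)) := by
      have : β^2 = 4 * Real.exp (-2*r^2 + 2*r) := by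
        rw [hβ, mul_pow, ← Real.exp_nat_mul]; norm_num; ring
      rw [this, Real.exp_add (-2 * r^2 + 2*r)]; ring
    have s5 : Real.exp (-2 * r^2 + 2 * r + (T^2/2 - 2*T)) ≤ Real.exp (-r^2 - r/4) * Real.exp (-(1/10) * a) := by
      rw [← Real.exp_add]; apply Real.exp_le_exp.2; nlinarith
    have := mul_pos (Real.exp_pos (-r^2 - r/4)) (Real.exp_pos (-(1/10) * a))
    linarith
  · have s1 : (β * (g - phi x))^2 / den β x ≤ β * g + phi x := by
      rw [div_le_iff₀ hd]; unfold den; rw [← hgdef]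
      have : 0 < β * (g * phi x) := by positivity
      have hb : β^2 ≤ 1 - β := by nlinarith
      have : β^2 * phi x^2 ≤ (1-β) * phi x ^2 := by gcongr
      have : 0 < β^2 * (g * phi x) := by positivity
      have : 0 ≤ (1-β) * (β * (g * phi x)) := mul_nonneg (by linarith) (by positivity)
      nlinarith
    have s2 : β * g ≤ 4 * (Real.exp (-r^2 - r/4) * Real.exp (-(1/10) * a)) := by
      calc β * g ≤ (2 * Real.exp (-r^2 + r)) * (2 * Real.exp (-a)) := by rw [hβ]; gcongr
        _ = 4 * Real.exp (-r^2 + r + -a) := by rw [Real.exp_add (-r^2 + r)]; ring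
        _ ≤ _ := by
          rw [← Real.exp_add]
          refine mul_le_mul_of_nonneg_left (Real.exp_le_exp.2 ?_) (by norm_num)
          linarith
    have s3 : phi x ≤ Real.exp (-r^2 - r/4) * Real.exp (-(1/10) * a) := by
      refine hple.trans ?_
      rw [← Real.exp_add]; apply Real.exp_le_exp.2; rw [← hax]
      nlinarith [mul_nonneg (sub_nonneg.2 h.le) (by linarith : 0 ≤ (T + a)/2 - 1/10)]
    have := mul_pos (Real.exp_pos (-r^2 - r/4)) (Real.exp_pos (-(1/10) * a))
    linarith

/-- ratio -/
def hr (β x : ℝ) : ℝ := phi x / den β x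

lemma hr_measurable (β : ℝ) : Measurable (hr β) := phi_cont.measurable.div (den_measurable β)

lemma hr_nonneg {β : ℝ} (h0 : 0 ≤ β) (h1 : β ≤ 1) (x : ℝ) : 0 ≤ hr β x :=
  div_nonneg (phi_pos x).le (den_pos h0 h1 x).le

lemma hr_le_two {β : ℝ} (h0 : 0 ≤ β) (h1 : β ≤ 1/2) (x : ℝ) : hr β x ≤ 2 := by
  unfold hr
  rw [div_le_iff₀ (den_pos h0 (by linarith) x)]
  unfold den
  have := phi_pos x
  have : 0 ≤ β * conv lapDen x := mul_nonneg h0 (conv_pos x).le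
  nlinarith

lemma hr_integrable {β : ℝ} (h0 : 0 ≤ β) (h1 : β ≤ 1/2) (μ : Measure ℝ) [IsFiniteMeasure μ] :
    Integrable (hr β) μ := by
  refine (integrable_const (2:ℝ)).mono' (hr_measurable β).aestronglyMeasurable
    (Filter.Eventually.of_forall fun x => ?_)
  rw [Real.norm_of_nonneg (hr_nonneg h0 (by linarith) x)]
  exact hr_le_two h0 h1 x

lemma null_expect {r : ℝ} (hr' : 100 ≤ r) {β : ℝ} (hβ : β = 2 * Real.exp (-r^2 + r))
    (hβ2 : β ≤ 1/2) :
    ∫ x, hr β x ∂(ProbabilityTheory.gaussianReal 0 1) ≤ 1 + Real.exp (-r^2) / 4 := by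
  have hβ0 : 0 < β := by rw [hβ]; positivity
  rw [ProbabilityTheory.integral_gaussianReal_eq_integral_smul one_ne_zero]
  simp_rw [phi_eq_pdf, smul_eq_mul]
  have hI := ((integrable_exp_abs (η := 1/10) (by norm_num)).const_mul (100 * Real.exp (-r^2 - r/4)))
  have hlin : Integrable (fun x => phi x - β * (conv lapDen x - phi x)) :=
    phi_integrable.sub ((conv_integrable.sub phi_integrable).const_mul β)
  have key : ∫ x, phi x * hr β x ≤ ∫ x, ((phi x - β * (conv lapDen x - phi x)) +
      100 * Real.exp (-r^2 - r/4) * Real.exp (-(1/10) * |x|)) := by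
    refine integral_mono_of_nonneg (Filter.Eventually.of_forall fun x =>
      mul_nonneg (phi_pos x).le (hr_nonneg hβ0.le (by linarith) x)) (hlin.add hI)
      (Filter.Eventually.of_forall fun x => ?_)
    have h1 := remainder_le hr' hβ hβ2 x
    have hd := den_pos hβ0.le (by linarith) x
    have h2 : phi x * hr β x = (phi x - β * (conv lapDen x - phi x)) +
        (β * (conv lapDen x - phi x))^2 / den β x := by
      unfold hr
      field_simp
      unfold den
      ring
    simp only
    rw [h2]; linarith
  refine key.trans ?_
  have e := integral_sub conv_integrable phi_integrable
  have e' : ∫ x, (phi x - β * (conv lapDen x - phi x)) = 1 := by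
    have := integral_sub phi_integrable ((conv_integrable.sub phi_integrable).const_mul β)
    simp only [Pi.sub_apply] at this
    rw [this, integral_const_mul, e, conv_integral, phi_integral]; ring
  rw [integral_add hlin hI, e', integral_const_mul, integral_exp_abs (by norm_num)]
  have h3 : Real.exp (-r^2 - r/4) * 8000 ≤ Real.exp (-r^2) := by
    have h4 : (8000:ℝ) ≤ Real.exp (r/4) := by
      have := Real.pow_div_factorial_le_exp 25 (by norm_num) 4
      have h5 : Real.exp 25 ≤ Real.exp (r/4) := Real.exp_le_exp.2 (by linarith)
      norm_num [Nat.factorial] at this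
      linarith
    calc _ ≤ Real.exp (-r^2 - r/4) * Real.exp (r/4) := by gcongr
      _ = _ := by rw [← Real.exp_add]; congr 1; ring
  norm_num
  linarith

lemma hr_tendsto {β : ℝ} (h0 : 0 < β) (h1 : β ≤ 1/2) :
    Filter.Tendsto (hr β) Filter.atTop (nhds 0) := by
  obtain ⟨c, hc, hcg⟩ := conv_ge_lap
  have hb : ∀ᶠ x in Filter.atTop, hr β x ≤ (1 / (β * c)) * Real.exp (-x) := by
    filter_upwards [Filter.eventually_ge_atTop (4:ℝ)] with x hx
    unfold hr
    rw [div_le_iff₀ (den_pos h0.le (by linarith) x)]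
    have h2 := hcg x
    rw [abs_of_nonneg (by linarith)] at h2
    have h3 : β * (c * Real.exp (-x)) ≤ den β x := by
      unfold den
      have : 0 ≤ (1 - β) * phi x := mul_nonneg (by linarith) (phi_pos x).le
      have : β * (c * Real.exp (-x)) ≤ β * conv lapDen x := by gcongr
      linarith
    have h4 : phi x ≤ Real.exp (-x) * Real.exp (-x) := by
      refine (phi_le_exp x).trans ?_
      rw [← Real.exp_add]; apply Real.exp_le_exp.2; nlinarith
    calc phi x ≤ Real.exp (-x) * Real.exp (-x) := h4
      _ = 1 / (β * c) * Real.exp (-x) * (β * (c * Real.exp (-x))) := by field_simp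
      _ ≤ _ := by gcongr
  refine tendsto_of_tendsto_of_tendsto_of_le_of_le' tendsto_const_nhds ?_
    (Filter.Eventually.of_forall fun x => hr_nonneg h0.le (by linarith) x) hb
  have := (Real.tendsto_exp_neg_atTop_nhds_zero).const_mul (1 / (β * c))
  simpa using this

lemma signal_expect {β : ℝ} (h0 : 0 < β) (h1 : β ≤ 1/2) :
    ∃ M : ℝ, ∫ x, hr β x ∂(ProbabilityTheory.gaussianReal M 1) ≤ 1/2 := by
  have hlim : Filter.Tendsto (fun k : ℕ => ∫ x, hr β (x + k) ∂(ProbabilityTheory.gaussianReal 0 1))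
      Filter.atTop (nhds (∫ _x : ℝ, (0:ℝ) ∂(ProbabilityTheory.gaussianReal 0 1))) := by
    refine tendsto_integral_of_dominated_convergence (fun _ => (2:ℝ)) (fun k => ?_)
      (integrable_const _) (fun k => ?_) ?_
    · exact ((hr_measurable β).comp (by fun_prop)).aestronglyMeasurable
    · refine Filter.Eventually.of_forall fun x => ?_
      rw [Real.norm_of_nonneg (hr_nonneg h0.le (by linarith) _)]
      exact hr_le_two h0.le h1 _
    · refine Filter.Eventually.of_forall fun x => ?_
      exact (hr_tendsto h0 h1).comp
        (Filter.tendsto_atTop_add_const_left _ x tendsto_natCast_atTop_atTop)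
  rw [integral_zero] at hlim
  obtain ⟨k, hk⟩ := (hlim.eventually (gt_mem_nhds (by norm_num : (0:ℝ) < 1/2))).exists
  refine ⟨k, ?_⟩
  have : ProbabilityTheory.gaussianReal (k:ℝ) 1
      = (ProbabilityTheory.gaussianReal 0 1).map (· + (k:ℝ)) := by
    rw [ProbabilityTheory.gaussianReal_map_add_const]; simp
  rw [this, integral_map (by fun_prop) (hr_measurable β).aestronglyMeasurable]
  exact hk.le

/-- likelihood ratio -/
def fr (α x : ℝ) : ℝ := den α x / den (2 * α) x

lemma fr_eq {α : ℝ} (h0 : 0 ≤ α) (h1 : 2 * α ≤ 1/2) (x : ℝ) :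
    fr α x = 1/2 + hr (2 * α) x / 2 := by
  have := den_pos (β := 2 * α) (by linarith) (by linarith) x
  unfold fr hr
  field_simp
  unfold den
  ring

lemma fr_integral {α : ℝ} (h0 : 0 ≤ α) (h1 : 2 * α ≤ 1/2) (μ : Measure ℝ) [IsProbabilityMeasure μ] :
    ∫ x, fr α x ∂μ = 1/2 + (∫ x, hr (2 * α) x ∂μ) / 2 := by
  simp_rw [fr_eq h0 h1]
  rw [integral_add (integrable_const _) ((hr_integrable (by linarith) h1 μ).div_const 2),
    ← integral_div]
  simp

lemma fr_integrable {α : ℝ} (h0 : 0 ≤ α) (h1 : 2 * α ≤ 1/2) (μ : Measure ℝ) [IsProbabilityMeasure μ] :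
    Integrable (fr α) μ := by
  refine ((integrable_const (1/2:ℝ)).add ((hr_integrable (by linarith) h1 μ).div_const 2)).congr
    (Filter.Eventually.of_forall fun x => ?_)
  simp [fr_eq h0 h1]

lemma logMarg_eq {n : ℕ} (α : ℝ) (X : Fin n → ℝ) : logMarg lapDen α X = ∑ i, Real.log (den α (X i)) := rfl

lemma logMarg_concave {n : ℕ} (X : Fin n → ℝ) :
    ConcaveOn ℝ (Icc (0:ℝ) 1) (fun α => logMarg lapDen α X) := by
  refine ⟨convex_Icc 0 1, fun a ha b hb p q hp hq hpq => ?_⟩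
  simp only [logMarg_eq, smul_eq_mul, Finset.mul_sum]
  rw [← Finset.sum_add_distrib]
  refine Finset.sum_le_sum fun i _ => ?_
  have h := strictConcaveOn_log_Ioi.concaveOn.2 (x := den a (X i)) (y := den b (X i))
    (den_pos ha.1 ha.2 _) (den_pos hb.1 hb.2 _) hp hq hpq
  simp only [smul_eq_mul] at h
  refine h.trans_eq ?_
  congr 1
  unfold den
  have : q = 1 - p := by linarith
  subst this; ring

lemma one_le_prod_of_lt {n : ℕ} {αn : ℝ} (hn : 0 ≤ αn) {hahat : (Fin n → ℝ) → ℝ}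
    (hm : IsMMLE lapDen αn hahat) {α : ℝ} (h1 : 2 * α ≤ 1/2)
    (X : Fin n → ℝ) (hX : hahat X < α) : 1 ≤ ∏ i, fr α (X i) := by
  obtain ⟨⟨hb1, hb2⟩, hmax⟩ := hm.2 X
  have hα0 : 0 < α := by linarith
  have hle : logMarg lapDen (2 * α) X ≤ logMarg lapDen α X := by
    by_contra hcon
    push Not at hcon
    have h2 := hmax α ⟨by linarith, by linarith⟩
    set d := 2 * α - hahat X with hd
    have hd0 : 0 < d := by linarith
    have hc := (logMarg_concave X).2 (show hahat X ∈ Icc (0:ℝ) 1 from ⟨by linarith, by linarith⟩)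
      (show 2 * α ∈ Icc (0:ℝ) 1 from ⟨by linarith, by linarith⟩)
      (show 0 ≤ α / d by positivity) (show 0 ≤ (α - hahat X) / d from div_nonneg (by linarith) hd0.le)
      (by rw [← add_div, div_eq_one_iff_eq hd0.ne']; linarith)
    have e : (α / d) • hahat X + ((α - hahat X) / d) • (2 * α) = α := by
      simp only [smul_eq_mul]; rw [div_mul_eq_mul_div, div_mul_eq_mul_div, ← add_div, div_eq_iff hd0.ne', hd]; ring
    simp only at hc
    rw [e] at hc
    simp only [smul_eq_mul] at hc
    have p1 : 0 < (α - hahat X) / d := div_pos (by linarith) hd0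
    have p2 : 0 < α / d := by positivity
    have p3 : α / d + (α - hahat X) / d = 1 := by
      rw [← add_div, div_eq_one_iff_eq hd0.ne']; linarith
    have q1 := mul_le_mul_of_nonneg_left h2 p2.le
    have q2 := mul_lt_mul_of_pos_left hcon p1
    have q3 : logMarg lapDen α X = α / d * logMarg lapDen α X + (α - hahat X) / d * logMarg lapDen α X := by
      rw [← add_mul, p3, one_mul]
    linarith
  have hp1 : ∀ i, 0 < den α (X i) := fun i => den_pos hα0.le (by linarith) _
  have hp2 : ∀ i, 0 < den (2 * α) (X i) := fun i => den_pos (by linarith) (by linarith) _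
  rw [logMarg_eq, logMarg_eq, ← Real.log_prod (fun i _ => (hp2 i).ne'), ← Real.log_prod (fun i _ => (hp1 i).ne'),
    Real.log_le_log_iff (Finset.prod_pos fun i _ => hp2 i) (Finset.prod_pos fun i _ => hp1 i)] at hle
  unfold fr
  rw [Finset.prod_div_distrib, one_le_div (Finset.prod_pos fun i _ => hp2 i)]
  exact hle


lemma aWt_eq (α x : ℝ) : aWt lapDen α x = α * conv lapDen x / den α x := rfl

lemma aWt_nonneg {α : ℝ} (h0 : 0 ≤ α) (h1 : α ≤ 1) (x : ℝ) : 0 ≤ aWt lapDen α x := by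
  rw [aWt_eq]
  exact div_nonneg (mul_nonneg h0 (conv_pos x).le) (den_pos h0 h1 x).le

lemma aWt_le_one {α : ℝ} (h0 : 0 ≤ α) (h1 : α ≤ 1) (x : ℝ) : aWt lapDen α x ≤ 1 := by
  rw [aWt_eq, div_le_one (den_pos h0 h1 x)]
  unfold den
  have : 0 ≤ (1 - α) * phi x := mul_nonneg (by linarith) (phi_pos x).le
  linarith

lemma coordPost_eq (α x : ℝ) :
    coordPost lapDen α x =
      volume.withDensity (fun u => ENNReal.ofReal (aWt lapDen α x / conv lapDen x * ker x u)) +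
      ENNReal.ofReal (1 - aWt lapDen α x) • Measure.dirac (0:ℝ) := by
  unfold coordPost
  rw [withDensity_add_measure]
  congr 1
  · refine withDensity_congr_ae ?_
    have : ∀ᵐ u : ℝ, u ≠ 0 := by simp [ae_iff]
    filter_upwards [this] with u hu
    simp only [coordDen, hu, if_false]
    congr 1
    unfold ker; ring
  · classical
    ext A hA
    rw [withDensity_apply _ hA, restrict_dirac' hA]
    by_cases h : (0:ℝ) ∈ A
    · simp [h, lintegral_dirac, coordDen]
    · simp [h]

lemma kern_nonneg {α : ℝ} (h0 : 0 ≤ α) (h1 : α ≤ 1) (x u : ℝ) :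
    0 ≤ aWt lapDen α x / conv lapDen x * ker x u :=
  mul_nonneg (div_nonneg (aWt_nonneg h0 h1 x) (conv_pos x).le) (ker_pos x u).le

lemma coordPost_prob {α : ℝ} (h0 : 0 ≤ α) (h1 : α ≤ 1) (x : ℝ) :
    IsProbabilityMeasure (coordPost lapDen α x) := by
  constructor
  rw [coordPost_eq]
  simp only [Measure.add_apply, Measure.smul_apply, MeasurableSet.univ, withDensity_apply,
    Measure.restrict_univ, smul_eq_mul, measure_univ, mul_one]
  rw [← ofReal_integral_eq_lintegral_ofReal ((ker_integrable x).const_mul _)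
    (Filter.Eventually.of_forall fun u => kern_nonneg h0 h1 x u), integral_const_mul, ← conv_eq,
    div_mul_cancel₀ _ (conv_pos x).ne', ← ENNReal.ofReal_add (aWt_nonneg h0 h1 x)
      (by linarith [aWt_le_one h0 h1 x])]
  simp

/-- coordinate risk -/
def Rf (α x μ : ℝ) : ℝ :=
  aWt lapDen α x / conv lapDen x * mom μ x + (1 - aWt lapDen α x) * μ ^ 2

lemma dens_measurable (α x : ℝ) :
    Measurable (fun u => ENNReal.ofReal (aWt lapDen α x / conv lapDen x * ker x u)) :=
  ((ker_cont_right x).measurable.const_mul _).ennreal_ofReal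

lemma coord_integrable_wd {α : ℝ} (h0 : 0 ≤ α) (h1 : α ≤ 1) (x μ : ℝ) :
    Integrable (fun u => (u - μ)^2)
      (volume.withDensity (fun u => ENNReal.ofReal (aWt lapDen α x / conv lapDen x * ker x u))) := by
  rw [integrable_withDensity_iff (dens_measurable α x) (by simp)]
  refine ((ker_moment_integrable μ x).const_mul (aWt lapDen α x / conv lapDen x)).congr
    (Filter.Eventually.of_forall fun u => ?_)
  simp only
  rw [ENNReal.toReal_ofReal (kern_nonneg h0 h1 x u)]; ring

lemma coord_integrable_dirac (α x μ : ℝ) :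
    Integrable (fun u : ℝ => (u - μ)^2)
      (ENNReal.ofReal (1 - aWt lapDen α x) • Measure.dirac (0:ℝ)) :=
  (integrable_dirac (by simp)).smul_measure (by simp)

lemma coord_integrable {α : ℝ} (h0 : 0 ≤ α) (h1 : α ≤ 1) (x μ : ℝ) :
    Integrable (fun u => (u - μ)^2) (coordPost lapDen α x) := by
  rw [coordPost_eq]
  exact (coord_integrable_wd h0 h1 x μ).add_measure (coord_integrable_dirac α x μ)

lemma coord_integral {α : ℝ} (h0 : 0 ≤ α) (h1 : α ≤ 1) (x μ : ℝ) :
    ∫ u, (u - μ)^2 ∂(coordPost lapDen α x) = Rf α x μ := by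
  rw [coordPost_eq, integral_add_measure (coord_integrable_wd h0 h1 x μ) (coord_integrable_dirac α x μ),
    integral_smul_measure, integral_dirac,
    integral_withDensity_eq_integral_toReal_smul (dens_measurable α x) (by simp)]
  unfold Rf
  congr 1
  · rw [mom, ← integral_const_mul]
    congr 1; ext u
    rw [ENNReal.toReal_ofReal (kern_nonneg h0 h1 x u), smul_eq_mul]; ring
  · rw [ENNReal.toReal_ofReal (by linarith [aWt_le_one h0 h1 x])]; simp

lemma post_integral {n : ℕ} {α : ℝ} (h0 : 0 ≤ α) (h1 : α ≤ 1) (X θ0 : Fin n → ℝ) :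
    ∫ θ, (∑ i, (θ i - θ0 i) ^ 2) ∂(post lapDen n α X) = ∑ i, Rf α (X i) (θ0 i) := by
  have : ∀ i, IsProbabilityMeasure (coordPost lapDen α (X i)) := fun i => coordPost_prob h0 h1 _
  unfold post
  rw [integral_finsetSum]
  · refine Finset.sum_congr rfl fun i _ => ?_
    rw [← coord_integral h0 h1]
    exact integral_comp_eval (μ := fun i => coordPost lapDen α (X i)) (i := i) (f := fun u => (u - θ0 i)^2)
      (coord_integrable h0 h1 _ _).aestronglyMeasurable
  · intro i _
    exact integrable_comp_eval (μ := fun i => coordPost lapDen α (X i)) (i := i) (f := fun u => (u - θ0 i)^2)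
      (coord_integrable h0 h1 _ _)

lemma Rf_nonneg {α : ℝ} (h0 : 0 ≤ α) (h1 : α ≤ 1) (x μ : ℝ) : 0 ≤ Rf α x μ := by
  rw [← coord_integral h0 h1]
  exact integral_nonneg fun u => sq_nonneg _

/-- lower constant -/
def c1 : ℝ := c2 * min (conv lapDen 0) 1

lemma c1_pos : 0 < c1 := mul_pos c2_pos (lt_min (conv_pos 0) one_pos)

lemma Rf_ge {α : ℝ} (h0 : 0 ≤ α) (h1 : α ≤ 1) (x : ℝ) : c1 * α ≤ Rf α x 0 := by
  have hg := conv_pos x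
  have hd := den_pos h0 h1 x
  have e : Rf α x 0 = α * mom 0 x / den α x := by
    unfold Rf; rw [aWt_eq]; field_simp; ring
  rw [e, le_div_iff₀ hd]
  have k1 : min (conv lapDen 0) 1 * phi x ≤ conv lapDen x :=
    (mul_le_mul_of_nonneg_right (min_le_left _ _) (phi_pos x).le).trans (conv_ge_phi x)
  have k2 : min (conv lapDen 0) 1 * conv lapDen x ≤ conv lapDen x :=
    (mul_le_mul_of_nonneg_right (min_le_right _ _) hg.le).trans_eq (one_mul _)
  have k3 : min (conv lapDen 0) 1 * den α x ≤ conv lapDen x := by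
    unfold den
    have a1 := mul_le_mul_of_nonneg_left k1 (by linarith : 0 ≤ 1 - α)
    have a2 := mul_le_mul_of_nonneg_left k2 h0
    nlinarith
  have k4 := mul_le_mul_of_nonneg_left k3 c2_pos.le
  have k5 : c1 * den α x ≤ mom 0 x := by
    unfold c1; linarith [mom_ge x]
  have := mul_le_mul_of_nonneg_left k5 h0
  linarith

lemma Rf_le (μ : ℝ) : ∃ C > 0, ∀ α x, 0 ≤ α → α ≤ 1 → Rf α x μ ≤ μ^2 + C * (1 + x^2) := by
  obtain ⟨C, hC, h⟩ := mom_le_conv μ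
  refine ⟨C, hC, fun α x h0 h1 => ?_⟩
  have a0 := aWt_nonneg h0 h1 x
  have a1 := aWt_le_one h0 h1 x
  have hg := conv_pos x
  have m1 : mom μ x / conv lapDen x ≤ C * (1 + x^2) := by
    rw [div_le_iff₀ hg]; exact h x
  have m0 : 0 ≤ mom μ x / conv lapDen x := div_nonneg (mom_nonneg μ x) hg.le
  have e : Rf α x μ = aWt lapDen α x * (mom μ x / conv lapDen x) + (1 - aWt lapDen α x) * μ^2 := by
    unfold Rf; ring
  rw [e]
  have : aWt lapDen α x * (mom μ x / conv lapDen x) ≤ 1 * (mom μ x / conv lapDen x) := by gcongr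
  have : (1 - aWt lapDen α x) * μ^2 ≤ μ^2 := by nlinarith [sq_nonneg μ, mul_nonneg a0 (sq_nonneg μ)]
  linarith

lemma Rf_measurable (μ : ℝ) : Measurable (fun p : ℝ × ℝ => Rf p.1 p.2 μ) := by
  have hg : Measurable (fun p : ℝ × ℝ => conv lapDen p.2) := conv_measurable.comp measurable_snd
  have hp : Measurable (fun p : ℝ × ℝ => phi p.2) := phi_cont.measurable.comp measurable_snd
  have hm : Measurable (fun p : ℝ × ℝ => mom μ p.2) := (mom_measurable μ).comp measurable_snd
  have ha : Measurable (fun p : ℝ × ℝ => aWt lapDen p.1 p.2) := by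
    unfold aWt
    exact (measurable_fst.mul hg).div (((measurable_const.sub measurable_fst).mul hp).add (measurable_fst.mul hg))
  unfold Rf
  exact ((ha.div hg).mul hm).add ((measurable_const.sub ha).mul measurable_const)

instance Pdata_prob (n : ℕ) (θ : Fin n → ℝ) : IsProbabilityMeasure (Pdata n θ) := by
  unfold Pdata; infer_instance

lemma risk_integrable {n : ℕ} {hahat : (Fin n → ℝ) → ℝ} (hm : Measurable hahat)
    (hb : ∀ X, 0 ≤ hahat X ∧ hahat X ≤ 1) (θ0 : Fin n → ℝ) :
    Integrable (fun X => ∑ i, Rf (hahat X) (X i) (θ0 i)) (Pdata n θ0) := by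
  refine integrable_finsetSum _ fun i _ => ?_
  obtain ⟨C, hC, h⟩ := Rf_le (θ0 i)
  have hsq : Integrable (fun x : ℝ => x^2) (ProbabilityTheory.gaussianReal (θ0 i) 1) := by
    have := ProbabilityTheory.memLp_id_gaussianReal (μ := θ0 i) (v := 1) 2
    exact this.integrable_sq
  have hI : Integrable (fun x : ℝ => (θ0 i)^2 + C * (1 + x^2)) (ProbabilityTheory.gaussianReal (θ0 i) 1) :=
    (integrable_const _).add (((integrable_const 1).add hsq).const_mul C)
  have hI2 : Integrable (fun X : Fin n → ℝ => (θ0 i)^2 + C * (1 + (X i)^2)) (Pdata n θ0) :=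
    integrable_comp_eval (μ := fun i => ProbabilityTheory.gaussianReal (θ0 i) 1) (i := i) hI
  refine hI2.mono' ?_ (Filter.Eventually.of_forall fun X => ?_)
  · exact ((Rf_measurable (θ0 i)).comp (hm.prodMk (measurable_pi_apply i))).aestronglyMeasurable
  · rw [Real.norm_of_nonneg (Rf_nonneg (hb X).1 (hb X).2 _ _)]
    exact h _ _ (hb X).1 (hb X).2

lemma prob_le {n : ℕ} {αn : ℝ} (hn : 0 ≤ αn) {hahat : (Fin n → ℝ) → ℝ}
    (hm : IsMMLE lapDen αn hahat) {α : ℝ} (h0 : 0 ≤ α) (h1 : 2 * α ≤ 1/2) (θ0 : Fin n → ℝ) :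
    (Pdata n θ0).real {X | hahat X < α} ≤
      ∏ i, ∫ x, fr α x ∂(ProbabilityTheory.gaussianReal (θ0 i) 1) := by
  have hI : Integrable (fun X : Fin n → ℝ => ∏ i, fr α (X i)) (Pdata n θ0) :=
    Integrable.fintype_prod (f := fun _ => fr α) (fun i => fr_integrable h0 h1 _)
  have hpos : ∀ X : Fin n → ℝ, 0 ≤ ∏ i, fr α (X i) := fun X => Finset.prod_nonneg fun i _ =>
    div_nonneg (den_pos h0 (by linarith) _).le (den_pos (by linarith) (by linarith) _).le
  have hmk := mul_meas_ge_le_integral_of_nonneg (Filter.Eventually.of_forall hpos) hI 1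
  have e : ∫ X, ∏ i, fr α (X i) ∂(Pdata n θ0) = ∏ i, ∫ x, fr α x ∂(ProbabilityTheory.gaussianReal (θ0 i) 1) := by
    unfold Pdata
    exact integral_fintype_prod_eq_prod (𝕜 := ℝ) (fun _ => fr α)
  rw [e, one_mul] at hmk
  refine le_trans ?_ hmk
  refine measureReal_mono (fun X hX => one_le_prod_of_lt hn hm h1 X hX) (measure_ne_top _ _)

lemma card_lt {n s : ℕ} (h : s ≤ n) : (Finset.univ.filter fun i : Fin n => (i:ℕ) < s).card = s := by
  have := Fin.card_filter_val_lt (n := n) (m := s)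
  simpa [h] using this

/-- Theorem 1: suboptimality of the Laplace slab.
There exist `D > 0`, `N₀ > 0`, `c₀ > 0` such that for any `n ≥ N₀` and any
`s` with `1 ≤ s ≤ c₀ n`, there is `θ₀ ∈ ℓ₀[s]` for which the complete
empirical Bayes posterior second moment is at least `D s exp(√(log(n/s)))`. -/
theorem laplace_slab_suboptimal :
    ∃ D > (0 : ℝ), ∃ N0 : ℕ, 0 < N0 ∧ ∃ c0 > (0 : ℝ),
      ∀ n : ℕ, N0 ≤ n → ∀ s : ℕ, 1 ≤ s → (s : ℝ) ≤ c0 * n →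
      ∀ t : ℝ → ℝ, IsThreshold lapDen t →
      ∀ αn : ℝ, αn ∈ Set.Ioo (0 : ℝ) 1 → t αn = Real.sqrt (2 * Real.log n) →
      ∀ hahat : (Fin n → ℝ) → ℝ, IsMMLE lapDen αn hahat →
      ∃ θ0 ∈ ell0 n s,
        D * s * Real.exp (Real.sqrt (Real.log ((n : ℝ) / s))) ≤
          postRisk lapDen hahat θ0 := by
  have hP0 : 0 < 1 - Real.exp (-(1/8)) := by
    have : Real.exp (-(1/8)) < 1 := Real.exp_lt_one_iff.2 (by norm_num)
    linarith
  refine ⟨c1 / 2 * (1 - Real.exp (-(1/8))), mul_pos (by linarith [c1_pos]) hP0, 1, one_pos,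
    Real.exp (-10000), Real.exp_pos _, ?_⟩
  intro n hn s hs hsn t _ αn hαn _ hahat hm
  have hn0 : (0:ℝ) < n := by exact_mod_cast hn
  have hs0 : (0:ℝ) < s := by exact_mod_cast hs
  set r := √(Real.log ((n : ℝ) / s)) with hrdef
  have hlog : 10000 ≤ Real.log ((n:ℝ)/s) := by
    rw [Real.le_log_iff_exp_le (by positivity), le_div_iff₀ hs0]
    calc Real.exp 10000 * s ≤ Real.exp 10000 * (Real.exp (-10000) * n) := by gcongr
      _ = n := by rw [← mul_assoc, ← Real.exp_add]; simp
  have hr2 : r^2 = Real.log ((n:ℝ)/s) := Real.sq_sqrt (by linarith)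
  have hr : 100 ≤ r := by
    apply Real.le_sqrt_of_sq_le; linarith
  have hexp : Real.exp (-r^2) = s / n := by
    rw [hr2, Real.exp_neg, Real.exp_log (by positivity), inv_div]
  have hsn2 : (s:ℝ) ≤ n / 2 := by
    have : Real.exp (-10000) ≤ 1/2 := by
      have := Real.add_one_le_exp (10000:ℝ)
      rw [Real.exp_neg, inv_le_comm₀ (Real.exp_pos _) (by norm_num)]
      linarith
    nlinarith
  have hsn' : s ≤ n := by
    have : (s:ℝ) ≤ n := by linarith
    exact_mod_cast this
  set α := Real.exp (-r^2 + r) with hα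
  have hα0 : 0 < α := Real.exp_pos _
  have hα1 : 2 * α ≤ 1/2 := by
    have : Real.exp (-r^2 + r) ≤ Real.exp (-3) := Real.exp_le_exp.2 (by nlinarith)
    have h3 : Real.exp (-3) ≤ 1/4 := by
      have := Real.add_one_le_exp (3:ℝ)
      rw [Real.exp_neg, inv_le_comm₀ (Real.exp_pos _) (by norm_num)]
      linarith
    linarith
  obtain ⟨M, hM⟩ := signal_expect (β := 2 * α) (by linarith) hα1
  have hN := null_expect hr (β := 2 * α) rfl hα1
  set θ0 : Fin n → ℝ := fun i => if (i:ℕ) < s then M else 0 with hθ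
  have hb : ∀ X, 0 ≤ hahat X ∧ hahat X ≤ 1 := fun X =>
    ⟨hαn.1.le.trans (hm.2 X).1.1, (hm.2 X).1.2⟩
  refine ⟨θ0, ?_, ?_⟩
  · change Nat.card {i : Fin n // θ0 i ≠ 0} ≤ s
    classical
    rw [Nat.card_eq_fintype_card, Fintype.card_subtype]
    refine (Finset.card_le_card ?_).trans_eq (card_lt hsn')
    intro i hi
    simp only [Finset.mem_filter, Finset.mem_univ, true_and] at hi ⊢
    by_contra hcon
    exact hi (by simp [hθ, hcon])
  -- probability bound
  have hprob : (Pdata n θ0).real {X | hahat X < α} ≤ Real.exp (-(1/8)) := by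
    refine (prob_le hαn.1.le hm hα0.le hα1 θ0).trans ?_
    have hterm : ∀ i : Fin n, ∫ x, fr α x ∂(ProbabilityTheory.gaussianReal (θ0 i) 1) ≤
        Real.exp (s / (8 * n) + if (i:ℕ) < s then -(1/4) else 0) := by
      intro i
      rw [fr_integral hα0.le hα1]
      by_cases h : (i:ℕ) < s
      · have e : θ0 i = M := by simp [hθ, h]
        rw [e]; simp only [h, if_true]
        have h5 := Real.add_one_le_exp (s / (8 * n) + -(1/4) : ℝ)
        have : (0:ℝ) ≤ s / (8 * n) := by positivity
        linarith
      · have e : θ0 i = 0 := by simp [hθ, h]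
        rw [e]; simp only [h, if_false]
        have h5 := Real.add_one_le_exp (s / (8 * n) + 0 : ℝ)
        rw [hexp] at hN
        have e2 : (s:ℝ) / n / 4 / 2 = s / (8 * n) := by field_simp; norm_num
        linarith
    have hnn : ∀ i : Fin n, 0 ≤ ∫ x, fr α x ∂(ProbabilityTheory.gaussianReal (θ0 i) 1) := fun i =>
      integral_nonneg fun x => div_nonneg (den_pos hα0.le (by linarith) _).le
        (den_pos (by linarith) (by linarith) _).le
    refine (Finset.prod_le_prod (fun i _ => hnn i) (fun i _ => hterm i)).trans ?_
    rw [← Real.exp_sum]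
    apply Real.exp_le_exp.2
    rw [Finset.sum_add_distrib, ← Finset.sum_filter, Finset.sum_const, Finset.sum_const, card_lt hsn']
    simp only [Finset.card_univ, Fintype.card_fin, nsmul_eq_mul]
    have e3 : (n:ℝ) * (s / (8 * n)) = s / 8 := by field_simp
    rw [e3]
    have : (1:ℝ) ≤ s := by exact_mod_cast hs
    linarith
  -- risk bound
  have hrisk : postRisk lapDen hahat θ0 = ∫ X, ∑ i, Rf (hahat X) (X i) (θ0 i) ∂(Pdata n θ0) := by
    unfold postRisk
    congr 1; ext X
    exact post_integral (hb X).1 (hb X).2 X θ0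
  rw [hrisk]
  have hmeas : MeasurableSet {X | hahat X < α} := measurableSet_lt hm.1 measurable_const
  set A := {X | hahat X < α}ᶜ with hA
  have hAprob : 1 - Real.exp (-(1/8)) ≤ (Pdata n θ0).real A := by
    rw [hA, probReal_compl_eq_one_sub hmeas]; linarith
  have hpt : ∀ X, A.indicator (fun _ => c1 * α * (n/2)) X ≤ ∑ i, Rf (hahat X) (X i) (θ0 i) := by
    intro X
    by_cases hX : X ∈ A
    · rw [indicator_of_mem hX]
      have hX' : α ≤ hahat X := by simpa [hA] using hX
      have hle : ∀ i : Fin n, (c1 * α + if (i:ℕ) < s then -(c1 * α) else 0) ≤ Rf (hahat X) (X i) (θ0 i) := by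
        intro i
        by_cases h : (i:ℕ) < s
        · simp only [h, if_true, add_neg_cancel]
          exact Rf_nonneg (hb X).1 (hb X).2 _ _
        · have e : θ0 i = 0 := by simp [hθ, h]
          rw [e]; simp only [h, if_false, add_zero]
          exact (mul_le_mul_of_nonneg_left hX' c1_pos.le).trans (Rf_ge (hb X).1 (hb X).2 _)
      refine le_trans ?_ (Finset.sum_le_sum fun i _ => hle i)
      rw [Finset.sum_add_distrib, ← Finset.sum_filter, Finset.sum_const, Finset.sum_const, card_lt hsn']
      simp only [Finset.card_univ, Fintype.card_fin, nsmul_eq_mul]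
      nlinarith [mul_pos c1_pos hα0]
    · rw [indicator_of_notMem hX]
      exact Finset.sum_nonneg fun i _ => Rf_nonneg (hb X).1 (hb X).2 _ _
  have hmono := integral_mono ((integrable_const (c1 * α * (n/2))).indicator hmeas.compl)
    (risk_integrable hm.1 hb θ0) hpt
  rw [integral_indicator_const _ hmeas.compl, smul_eq_mul] at hmono
  refine le_trans ?_ hmono
  have e4 : α = s / n * Real.exp r := by rw [hα, Real.exp_add, hexp]
  have e5 : c1 * α * (n/2) = c1 / 2 * s * Real.exp r := by rw [e4]; field_simp
  rw [e5]
  have : 0 ≤ c1 / 2 * s * Real.exp r := by have := c1_pos; positivity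
  calc _ = (1 - Real.exp (-(1/8))) * (c1 / 2 * s * Real.exp r) := by ring
    _ ≤ _ := by gcongr


end
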